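/- Let p > 0. If p < 1, then there exist a Borel probability measure μ on ℝ with μ(ℝ \ 𝕃) = 0 and constants C > 0, M > 1 such that |μ̂(ξ)| ≤ C·exp(−(log|ξ|)^p) for all |ξ| ≥ M. If p ≥ 1, then no Borel probability measure μ on ℝ with μ(ℝ \ 𝕃) = 0 satisfies |μ̂(ξ)| ≤ C·exp(−(log|ξ|)^p) for all |ξ| ≥ M, for any constants C > 0, M > 1. -/

import Mathlib

open MeasureTheory Filter Set

/-- The Fourier transform of a measure on `ℝ`: `μ̂(ξ) = ∫ e^(−2πiξx) dμ(x)`. -/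
noncomputable def fourierT (μ : Measure ℝ) (ξ : ℝ) : ℂ :=
  ∫ x, Complex.exp (((-2 * Real.pi * ξ * x : ℝ) : ℂ) * Complex.I) ∂μ



lemma gaussK_integrable : Integrable (fun s : ℝ => Real.exp (-Real.pi * s ^ 2) * |s| ^ (-(1/2) : ℝ)) := by
  have h := (integrableOn_rpow_mul_exp_neg_mul_sq (b := Real.pi) Real.pi_pos (s := -(1/2)) (by norm_num))
  have h2 : IntegrableOn (fun s : ℝ => Real.exp (-Real.pi * s ^ 2) * |s| ^ (-(1/2) : ℝ)) (Ioi 0) := by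
    refine h.congr_fun (fun x hx => ?_) measurableSet_Ioi
    simp only [abs_of_pos (mem_Ioi.1 hx)]
    ring
  have h3 : IntegrableOn (fun s : ℝ => Real.exp (-Real.pi * s ^ 2) * |s| ^ (-(1/2) : ℝ)) (Iic 0) := by
    rw [← Measure.map_neg_eq_self (volume : Measure ℝ)]
    let m : MeasurableEmbedding fun x : ℝ => -x := (Homeomorph.neg ℝ).measurableEmbedding
    rw [m.integrableOn_map_iff]
    simp_rw [Function.comp_def, abs_neg, neg_preimage, neg_Iic, neg_zero, neg_sq]
    exact Iff.mpr integrableOn_Ici_iff_integrableOn_Ioi h2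
  rw [← integrableOn_univ, ← Iic_union_Ioi (a := (0:ℝ))]
  exact h3.union h2

lemma gauss_formula (y : ℝ) : Complex.exp (-Real.pi * y ^ 2) =
    ∫ s : ℝ, Complex.exp (((-2 * Real.pi * y * s : ℝ) : ℂ) * Complex.I) * Complex.exp (-Real.pi * s ^ 2) := by
  have h := congrFun (fourier_gaussian_pi (b := 1) (by simp)) y
  rw [Real.fourier_real_eq_integral_exp_smul] at h
  simp only [one_div, Complex.one_cpow, one_mul, mul_one, div_one] at h
  rw [← h]
  congr 1; ext s
  rw [smul_eq_mul]
  push_cast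
  congr 2
  ring

lemma norm_cexp_real_I (t : ℝ) : ‖Complex.exp ((t : ℂ) * Complex.I)‖ = 1 :=
  Complex.norm_exp_ofReal_mul_I t

lemma norm_fourierT_le_one (μ : Measure ℝ) [IsProbabilityMeasure μ] (ξ : ℝ) : ‖fourierT μ ξ‖ ≤ 1 := by
  unfold fourierT
  refine (norm_integral_le_of_norm_le_const (C := 1) ?_).trans ?_
  · exact Eventually.of_forall (fun x => (norm_cexp_real_I _).le)
  · simp

lemma ball_bound (μ : Measure ℝ) [IsProbabilityMeasure μ] (C : ℝ)
    (hC : ∀ ξ : ℝ, ξ ≠ 0 → ‖fourierT μ ξ‖ ≤ C * |ξ| ^ (-(1/2) : ℝ)) :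
    ∃ K > (0:ℝ), ∀ a r : ℝ, 0 < r → μ (Metric.closedBall a r) ≤ ENNReal.ofReal (K * r ^ (1/2 : ℝ)) := by
  set K₀ := ∫ s : ℝ, Real.exp (-Real.pi * s ^ 2) * |s| ^ (-(1/2) : ℝ) with hK₀
  refine ⟨Real.exp Real.pi * (|C| * K₀ + 1), ?_, ?_⟩
  · have : 0 ≤ K₀ := integral_nonneg (fun s => by positivity)
    positivity
  intro a r hr
  have hfub : ∫ x, Complex.exp (-Real.pi * (((x - a) / r : ℝ) : ℂ) ^ 2) ∂μ
      = ∫ s : ℝ, (Complex.exp (((2 * Real.pi * a * s / r : ℝ) : ℂ) * Complex.I) * Complex.exp (-Real.pi * s ^ 2)) * fourierT μ (s / r) := by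
    rw [integral_congr_ae (Eventually.of_forall (fun x => gauss_formula ((x - a) / r)))]
    rw [integral_integral_swap]
    · congr 1; ext s
      unfold fourierT
      rw [← integral_const_mul]
      congr 1; ext x
      rw [← Complex.exp_add, ← Complex.exp_add, ← Complex.exp_add]
      congr 1
      push_cast
      field_simp
      ring
    · have hg : Integrable (fun z : ℝ × ℝ => (1:ℝ) * Real.exp (-Real.pi * z.2 ^ 2)) (μ.prod volume) :=
        (integrable_const (1:ℝ)).mul_prod (integrable_exp_neg_mul_sq Real.pi_pos)
      refine hg.mono ?_ ?_
      · apply Continuous.aestronglyMeasurable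
        unfold Function.uncurry
        fun_prop
      · refine Eventually.of_forall (fun z => ?_)
        simp only [Function.uncurry, norm_mul, norm_cexp_real_I, one_mul]
        rw [Complex.norm_exp]
        simp [← Complex.ofReal_pow]
  have hreal : ∫ x, Real.exp (-Real.pi * ((x - a) / r) ^ 2) ∂μ ≤ |C| * K₀ * r ^ (1/2 : ℝ) := by
    have e1 : ((∫ x, Real.exp (-Real.pi * ((x - a) / r) ^ 2) ∂μ : ℝ) : ℂ) = ∫ x, Complex.exp (-Real.pi * (((x - a) / r : ℝ) : ℂ) ^ 2) ∂μ := by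
      rw [← integral_complex_ofReal]
      congr 1; ext x; push_cast; rfl
    have e2 : ‖∫ x, Complex.exp (-Real.pi * (((x - a) / r : ℝ) : ℂ) ^ 2) ∂μ‖ ≤
        ∫ s : ℝ, |C| * r ^ (1/2 : ℝ) * (Real.exp (-Real.pi * s ^ 2) * |s| ^ (-(1/2) : ℝ)) := by
      rw [hfub]
      refine norm_integral_le_of_norm_le (gaussK_integrable.const_mul _) ?_
      have : ∀ᵐ s : ℝ, s ≠ 0 := by
        simp [ae_iff]
      filter_upwards [this] with s hs
      rw [norm_mul, norm_mul, norm_cexp_real_I, Complex.norm_exp]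
      have h1 := hC (s / r) (by positivity)
      have h2 : |s / r| ^ (-(1/2) : ℝ) = r ^ (1/2 : ℝ) * |s| ^ (-(1/2) : ℝ) := by
        rw [abs_div, abs_of_pos hr, Real.div_rpow (abs_nonneg _) hr.le, Real.rpow_neg hr.le (1/2)]
        field_simp
      have h3 : C * |s / r| ^ (-(1/2) : ℝ) ≤ |C| * |s / r| ^ (-(1/2) : ℝ) := by
        gcongr; exact le_abs_self _
      have h4 := h1.trans h3
      rw [h2] at h4
      have h5 : (-(Real.pi : ℂ) * (s : ℂ) ^ 2).re = -Real.pi * s ^ 2 := by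
        simp [← Complex.ofReal_pow]
      rw [h5]
      calc _ ≤ 1 * Real.exp (-Real.pi * s ^ 2) * (|C| * (r ^ (1/2 : ℝ) * |s| ^ (-(1/2) : ℝ))) := by gcongr
        _ = _ := by ring
    rw [← e1, integral_const_mul] at e2
    calc _ ≤ ‖((∫ x, Real.exp (-Real.pi * ((x - a) / r) ^ 2) ∂μ : ℝ) : ℂ)‖ := by
            rw [Complex.norm_real]; exact le_abs_self _
      _ ≤ _ := e2
      _ = _ := by ring
  have hgint : Integrable (fun x => Real.exp (-Real.pi * ((x - a) / r) ^ 2)) μ := by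
    refine Integrable.of_bound (C := 1) (by apply Continuous.aestronglyMeasurable; fun_prop) ?_
    refine Eventually.of_forall (fun x => ?_)
    rw [Real.norm_eq_abs, abs_of_pos (Real.exp_pos _)]
    apply Real.exp_le_one_iff.2
    have := Real.pi_pos
    nlinarith [sq_nonneg ((x - a) / r)]
  have hmark : Real.exp (-Real.pi) * μ.real (Metric.closedBall a r) ≤ ∫ x, Real.exp (-Real.pi * ((x - a) / r) ^ 2) ∂μ := by
    have h0 := mul_meas_ge_le_integral_of_nonneg (μ := μ) (f := fun x => Real.exp (-Real.pi * ((x - a) / r) ^ 2))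
      (Eventually.of_forall (fun x => (Real.exp_pos _).le)) hgint (Real.exp (-Real.pi))
    refine le_trans ?_ h0
    gcongr
    · simp
    · intro x hx
      simp only [Metric.mem_closedBall, Real.dist_eq] at hx
      simp only [mem_ofPred_eq, Real.exp_le_exp]
      have : ((x - a) / r) ^ 2 ≤ 1 := by
        rw [div_pow, div_le_one (by positivity)]
        exact sq_le_sq' (by linarith [neg_abs_le (x-a)]) ((le_abs_self _).trans hx)
      nlinarith [Real.pi_pos]
  have hfin : μ.real (Metric.closedBall a r) ≤ Real.exp Real.pi * (|C| * K₀ + 1) * r ^ (1/2 : ℝ) := by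
    have h1 := hmark.trans hreal
    rw [Real.exp_neg] at h1
    have h2 : μ.real (Metric.closedBall a r) ≤ Real.exp Real.pi * (|C| * K₀ * r ^ (1/2 : ℝ)) := by
      rwa [inv_mul_le_iff₀ (Real.exp_pos _)] at h1
    refine h2.trans ?_
    have : 0 ≤ r ^ (1/2 : ℝ) := by positivity
    have := Real.exp_pos Real.pi
    nlinarith [mul_nonneg this.le ‹0 ≤ r ^ (1/2 : ℝ)›]
  rw [← ENNReal.ofReal_toReal (measure_ne_top μ (Metric.closedBall a r))]
  exact ENNReal.ofReal_le_ofReal hfin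

lemma liouville_null (μ : Measure ℝ) (K : ℝ) (hK : 0 < K)
    (hb : ∀ a r : ℝ, 0 < r → μ (Metric.closedBall a r) ≤ ENNReal.ofReal (K * r ^ (1/2 : ℝ))) :
    μ {x : ℝ | Liouville x} = 0 := by
  have hsub : {x : ℝ | Liouville x} ⊆ ⋃ N : ℕ, {x : ℝ | Liouville x ∧ |x| ≤ N} := by
    intro x hx
    obtain ⟨N, hN⟩ := exists_nat_ge |x|
    exact mem_iUnion.2 ⟨N, hx, hN⟩
  refine measure_mono_null hsub (measure_iUnion_null (fun N => ?_))
  have hS : Summable (fun j : ℕ => 1 / ((j : ℝ) + 2) ^ 2) := by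
    have := (summable_nat_add_iff 2).2 (Real.summable_one_div_nat_pow.2 (by norm_num : 1 < 2))
    simpa using this
  set S := ∑' j : ℕ, 1 / ((j : ℝ) + 2) ^ 2 with hSdef
  have key : ∀ i : ℕ, μ {x : ℝ | Liouville x ∧ |x| ≤ N} ≤
      ENNReal.ofReal ((2 * N + 3) * K * (1/2) ^ i * S) := by
    intro i
    have hcov : {x : ℝ | Liouville x ∧ |x| ≤ N} ⊆ ⋃ j : ℕ,
        ⋃ a ∈ Finset.Icc (-((N + 1) * (j + 2) : ℤ)) ((N + 1) * (j + 2) : ℤ),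
          Metric.closedBall ((a : ℝ) / ((j : ℝ) + 2)) (1 / ((j : ℝ) + 2) ^ (2 * (i + 3))) := by
      rintro x ⟨hx, hxN⟩
      obtain ⟨a, b, hb1, -, hab⟩ := hx (2 * (i + 3))
      obtain ⟨j, hj⟩ : ∃ j : ℕ, b = j + 2 := ⟨(b - 2).toNat, by omega⟩
      have hbj : (b : ℝ) = j + 2 := by rw [hj]; push_cast; ring
      rw [hbj] at hab
      have hbpos : (0 : ℝ) < j + 2 := by positivity
      refine mem_iUnion.2 ⟨j, mem_iUnion₂.2 ⟨a, ?_, ?_⟩⟩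
      · have h1 : (1 : ℝ) / ((j : ℝ) + 2) ^ (2 * (i + 3)) ≤ 1 := by
          rw [div_le_one (by positivity)]
          apply one_le_pow₀; linarith
        have h2 : |(a : ℝ) / ((j : ℝ) + 2)| ≤ N + 1 := by
          have := abs_sub_abs_le_abs_sub ((a : ℝ) / ((j : ℝ) + 2)) x
          rw [abs_sub_comm] at this
          linarith
        rw [abs_div, abs_of_pos hbpos, div_le_iff₀ hbpos] at h2
        have h3 : |a| ≤ ((N + 1) * (j + 2) : ℤ) := by exact_mod_cast h2
        rw [Finset.mem_Icc]
        exact abs_le.1 h3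
      · rw [Metric.mem_closedBall, Real.dist_eq]
        exact hab.le
    refine (measure_mono hcov).trans ((measure_iUnion_le _).trans ?_)
    rw [hSdef, ← tsum_mul_left, ENNReal.ofReal_tsum_of_nonneg (fun j => by positivity) (hS.mul_left _)]
    refine ENNReal.tsum_le_tsum (fun j => ?_)
    refine (measure_biUnion_finset_le _ _).trans ?_
    have hbpos : (0 : ℝ) < j + 2 := by positivity
    refine (Finset.sum_le_sum (fun a _ => hb _ _ (by positivity))).trans ?_
    rw [Finset.sum_const, Int.card_Icc, nsmul_eq_mul]
    have hsq : (1 / ((j : ℝ) + 2) ^ (2 * (i + 3))) ^ (1/2 : ℝ) = 1 / ((j : ℝ) + 2) ^ (i + 3) := by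
      rw [← Real.sqrt_eq_rpow, Real.sqrt_eq_iff_mul_self_eq (by positivity) (by positivity)]
      field_simp
      ring
    rw [hsq, ← ENNReal.ofReal_natCast, ← ENNReal.ofReal_mul (by positivity)]
    apply ENNReal.ofReal_le_ofReal
    have hcard : (((((N + 1) * (j + 2) : ℤ) + 1 - (-((N + 1) * (j + 2) : ℤ))).toNat : ℕ) : ℝ) ≤ (2 * N + 3) * (j + 2) := by
      have : ((((N + 1) * (j + 2) : ℤ) + 1 - (-((N + 1) * (j + 2) : ℤ))).toNat : ℕ) = 2 * ((N + 1) * (j + 2)) + 1 := by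
        have e : (((N + 1) * (j + 2) : ℤ) + 1 - (-((N + 1) * (j + 2) : ℤ))) = ((2 * ((N + 1) * (j + 2)) + 1 : ℕ) : ℤ) := by
          push_cast; ring
        rw [e, Int.toNat_natCast]
      rw [this]; push_cast; nlinarith
    have hp2 : 1 / ((j : ℝ) + 2) ^ (i + 3) ≤ (1/2) ^ i * (1 / ((j : ℝ) + 2) ^ 2) * (1 / ((j : ℝ) + 2)) := by
      have : (1 / ((j : ℝ) + 2)) ^ i ≤ (1/2) ^ i := by
        gcongr; linarith
      calc 1 / ((j : ℝ) + 2) ^ (i + 3) = (1 / ((j : ℝ) + 2)) ^ i * (1 / ((j : ℝ) + 2) ^ 2) * (1 / ((j : ℝ) + 2)) := by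
            rw [one_div_pow]; field_simp; ring
        _ ≤ _ := by gcongr
    calc _ ≤ ((2 * N + 3) * (j + 2)) * (K * ((1/2) ^ i * (1 / ((j : ℝ) + 2) ^ 2) * (1 / ((j : ℝ) + 2)))) := by gcongr
      _ = _ := by field_simp
  have hlim : Tendsto (fun i : ℕ => ENNReal.ofReal ((2 * N + 3) * K * (1/2) ^ i * S)) atTop (nhds 0) := by
    rw [← ENNReal.ofReal_zero]
    apply ENNReal.tendsto_ofReal
    have := ((tendsto_pow_atTop_nhds_zero_of_lt_one (r := (1/2:ℝ)) (by norm_num) (by norm_num)).const_mul ((2 * N + 3) * K)).mul_const S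
    simpa using this
  exact le_antisymm (ge_of_tendsto' hlim key) zero_le

lemma part_two (p : ℝ) (hp : 1 ≤ p) : ¬ ∃ μ : Measure ℝ, IsProbabilityMeasure μ ∧ μ {x : ℝ | Liouville x}ᶜ = 0 ∧
        ∃ C > (0 : ℝ), ∃ M > (1 : ℝ),
          ∀ ξ : ℝ, M ≤ |ξ| →
            ‖fourierT μ ξ‖ ≤ C * Real.exp (-(Real.log |ξ|) ^ p) := by
  rintro ⟨μ, hμ, hL, C, hC, M, hM, h⟩
  set M' := max M (Real.exp 1) with hM'
  have hM'1 : 1 < M' := lt_of_lt_of_le hM (le_max_left _ _)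
  obtain ⟨K, hK, hball⟩ := ball_bound μ (C + M' ^ (1/2 : ℝ)) (by
    intro ξ hξ
    have hpos : 0 < |ξ| := abs_pos.2 hξ
    have hr : 0 < |ξ| ^ (-(1/2) : ℝ) := by positivity
    have hr2 : 0 < M' ^ (1/2 : ℝ) := by positivity
    rcases le_total M' |ξ| with hle | hle
    · have h1 := h ξ ((le_max_left _ _).trans hle)
      have hlog : 1 ≤ Real.log |ξ| := by
        rw [Real.le_log_iff_exp_le hpos]; exact (le_max_right _ _).trans hle
      have h2 : Real.exp (-(Real.log |ξ|) ^ p) ≤ |ξ| ^ (-(1/2) : ℝ) := by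
        rw [Real.rpow_def_of_pos hpos, Real.exp_le_exp]
        have := Real.rpow_le_rpow_of_exponent_le hlog hp
        rw [Real.rpow_one] at this
        linarith
      nlinarith
    · refine (norm_fourierT_le_one μ ξ).trans ?_
      have h3 : 1 ≤ M' ^ (1/2 : ℝ) * |ξ| ^ (-(1/2) : ℝ) := by
        rw [Real.rpow_neg hpos.le, ← div_eq_mul_inv, one_le_div (by positivity)]
        exact Real.rpow_le_rpow hpos.le hle (by norm_num)
      nlinarith)
  have h0 := liouville_null μ K hK hball
  have : μ univ = 0 := by
    rw [← union_compl_self {x : ℝ | Liouville x}]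
    exact measure_union_null h0 hL
  simp at this


/-- The character `t ↦ e^(-2πit)`. -/
noncomputable def ee (t : ℝ) : ℂ := Complex.exp (((-2 * Real.pi * t : ℝ) : ℂ) * Complex.I)

lemma norm_ee (t : ℝ) : ‖ee t‖ = 1 := Complex.norm_exp_ofReal_mul_I _

lemma ee_add (s t : ℝ) : ee (s + t) = ee s * ee t := by
  unfold ee; rw [← Complex.exp_add]; congr 1; push_cast; ring

lemma continuous_ee : Continuous ee := by unfold ee; fun_prop

lemma ee_zero : ee 0 = 1 := by simp [ee]

/-- Fourier transform of a real function. -/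
noncomputable def ft (g : ℝ → ℝ) (ξ : ℝ) : ℂ := ∫ x, (g x : ℂ) * ee (ξ * x)

/-- The decay weight. -/
noncomputable def WW (p t : ℝ) : ℝ := Real.exp (-(Real.log (1 + |t|)) ^ p)

lemma WW_pos (p t : ℝ) : 0 < WW p t := Real.exp_pos _

lemma WW_slow {p : ℝ} (hp : 0 < p) (hp1 : p < 1) (ξ m : ℝ) :
    WW p m ≤ Real.exp 1 * WW p ξ * (1 + |ξ + m|) := by
  unfold WW
  have h1 : 0 ≤ Real.log (1 + |m|) := Real.log_nonneg (by linarith [abs_nonneg m])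
  have h2 : 0 ≤ Real.log (1 + |ξ + m|) := Real.log_nonneg (by linarith [abs_nonneg (ξ + m)])
  have h0 : 0 ≤ Real.log (1 + |ξ|) := Real.log_nonneg (by linarith [abs_nonneg ξ])
  have h3 : Real.log (1 + |ξ|) ≤ Real.log (1 + |m|) + Real.log (1 + |ξ + m|) := by
    rw [← Real.log_mul (by positivity) (by positivity)]
    apply Real.log_le_log (by positivity)
    have : |ξ| ≤ |ξ + m| + |m| := by
      have := abs_sub (ξ + m) m
      simpa using this
    nlinarith [abs_nonneg m, abs_nonneg (ξ + m), mul_nonneg (abs_nonneg m) (abs_nonneg (ξ + m))]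
  have h4 : (Real.log (1 + |ξ|)) ^ p ≤ (Real.log (1 + |m|)) ^ p + (Real.log (1 + |ξ + m|)) ^ p :=
    (Real.rpow_le_rpow h0 h3 hp.le).trans (Real.rpow_add_le_add_rpow h1 h2 hp.le hp1.le)
  have h5 : (Real.log (1 + |ξ + m|)) ^ p ≤ 1 + Real.log (1 + |ξ + m|) := by
    rcases le_total (Real.log (1 + |ξ + m|)) 1 with h | h
    · have := Real.rpow_le_one h2 h hp.le
      linarith
    · have := Real.rpow_le_rpow_of_exponent_le h hp1.le
      rw [Real.rpow_one] at this
      linarith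
  have h6 : 1 + |ξ + m| = Real.exp (Real.log (1 + |ξ + m|)) := (Real.exp_log (by positivity)).symm
  rw [h6, ← Real.exp_add, ← Real.exp_add, Real.exp_le_exp]
  linarith

lemma sum_shift : ∃ S > (0:ℝ), ∀ ξ : ℝ, Summable (fun m : ℤ => 1 / (1 + |ξ + m|) ^ 2) ∧
    ∑' m : ℤ, 1 / (1 + |ξ + m|) ^ 2 ≤ S := by
  have hs : Summable (fun m : ℤ => 4 / (1 + |(m:ℝ)|) ^ 2) := by
    have h1 : Summable (fun m : ℤ => 1 / (m:ℝ) ^ 2) := Real.summable_one_div_int_pow.2 (by norm_num)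
    have h2 : Summable (fun m : ℤ => 4 * (1 / (m:ℝ) ^ 2)) := h1.mul_left 4
    refine Summable.of_norm_bounded_eventually h2 ?_
    have : ∀ᶠ m : ℤ in cofinite, m ≠ 0 := by
      exact (finite_singleton (0:ℤ)).compl_mem_cofinite
    filter_upwards [this] with m hm
    have : 0 < |(m:ℝ)| := abs_pos.2 (by exact_mod_cast hm)
    rw [Real.norm_of_nonneg (by positivity), mul_one_div, ← sq_abs (m:ℝ)]
    gcongr
    linarith
  refine ⟨∑' m : ℤ, 4 / (1 + |(m:ℝ)|) ^ 2, ?_, ?_⟩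
  · refine hs.tsum_pos (fun m => by positivity) 0 (by positivity)
  intro ξ
  have hs' : Summable (fun m : ℤ => 4 / (1 + |((m + ⌊ξ⌋ : ℤ):ℝ)|) ^ 2) :=
    hs.comp_injective (add_left_injective ⌊ξ⌋)
  have hle : ∀ m : ℤ, 1 / (1 + |ξ + m|) ^ 2 ≤ 4 / (1 + |((m + ⌊ξ⌋ : ℤ):ℝ)|) ^ 2 := by
    intro m
    have h1 : |((m + ⌊ξ⌋ : ℤ):ℝ)| ≤ |ξ + m| + 1 := by
      have e : ((m + ⌊ξ⌋ : ℤ):ℝ) = (ξ + m) - Int.fract ξ := by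
        push_cast; rw [Int.fract]; ring
      rw [e]
      refine (abs_sub _ _).trans ?_
      rw [abs_of_nonneg (Int.fract_nonneg ξ)]
      linarith [Int.fract_lt_one ξ]
    have h2 := abs_nonneg (ξ + m)
    rw [div_le_div_iff₀ (by positivity) (by positivity)]
    nlinarith [abs_nonneg ((m + ⌊ξ⌋ : ℤ):ℝ)]
  have hsum := Summable.of_nonneg_of_le (fun m => by positivity) hle hs'
  refine ⟨hsum, (hsum.tsum_le_tsum hle hs').trans ?_⟩
  exact ((Equiv.addRight ⌊ξ⌋).tsum_eq (fun m : ℤ => 4 / (1 + |(m:ℝ)|) ^ 2)).le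

/-- A multiplier function with rapidly decaying Fourier series. -/
structure Blk (p ε : ℝ) (k : ℕ) (f : ℝ → ℝ) (a : ℤ → ℂ) (K : Set ℝ) : Prop where
  nonneg : ∀ x, 0 ≤ f x
  rep : ∀ x, HasSum (fun m : ℤ => a m * ee (m * x)) (f x : ℂ)
  a0 : a 0 = 1
  decay : ∃ B, ∀ m : ℤ, ‖a m‖ ≤ B / (1 + |(m:ℝ)|) ^ 3
  small : ∀ m : ℤ, m ≠ 0 → ‖a m‖ ≤ ε * WW p m
  closed : IsClosed K
  supp : ∀ x, f x ≠ 0 → x ∈ K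
  approx : ∀ x ∈ K, ∃ c b : ℤ, 1 < b ∧ x ≠ c / b ∧ |x - c / b| < 1 / (b : ℝ) ^ k

lemma Blk.summ {p ε : ℝ} {k : ℕ} {f : ℝ → ℝ} {a : ℤ → ℂ} {K : Set ℝ} (h : Blk p ε k f a K) :
    Summable (fun m => ‖a m‖) := by
  obtain ⟨B, hB⟩ := h.decay
  obtain ⟨S, -, hS⟩ := sum_shift
  have h0 := (hS 0).1.mul_left B
  refine Summable.of_nonneg_of_le (fun m => norm_nonneg _) (fun m => (hB m).trans ?_) h0
  have hB0 : 0 ≤ B := by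
    have := (norm_nonneg _).trans (hB 0)
    simpa using this
  rw [zero_add, mul_one_div]
  gcongr
  · linarith [abs_nonneg (m:ℝ)]
  · norm_num

lemma Blk.cont {p ε : ℝ} {k : ℕ} {f : ℝ → ℝ} {a : ℤ → ℂ} {K : Set ℝ} (h : Blk p ε k f a K) :
    Continuous f := by
  have h1 : Continuous (fun x => ∑' m : ℤ, a m * ee (m * x)) := by
    refine continuous_tsum (fun m => ?_) h.summ (fun m x => ?_)
    · exact continuous_const.mul (continuous_ee.comp (by fun_prop))
    · rw [norm_mul, norm_ee, mul_one]
  have h2 : f = fun x => (∑' m : ℤ, a m * ee (m * x)).re := by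
    ext x; rw [(h.rep x).tsum_eq]; simp
  rw [h2]
  exact Complex.continuous_re.comp h1

/-- Admissible densities. -/
structure Adm (g : ℝ → ℝ) : Prop where
  cont : Continuous g
  nonneg : ∀ x, 0 ≤ g x
  supp : ∀ x, g x ≠ 0 → x ∈ Icc (1:ℝ) 2
  decay : ∃ G > 0, ∀ ξ, ‖ft g ξ‖ ≤ G / (1 + |ξ|) ^ 3

lemma Adm.integrable {g : ℝ → ℝ} (h : Adm g) : Integrable g := by
  apply h.cont.integrable_of_hasCompactSupport
  apply HasCompactSupport.intro (isCompact_Icc (a := (1:ℝ)) (b := 2))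
  intro x hx
  by_contra h0
  exact hx (h.supp x h0)

lemma ft_mul {p ε : ℝ} {k : ℕ} {f : ℝ → ℝ} {a : ℤ → ℂ} {K : Set ℝ} (h : Blk p ε k f a K)
    {g : ℝ → ℝ} (hg : Adm g) (ξ : ℝ) :
    HasSum (fun m : ℤ => a m * ft g (ξ + m)) (ft (fun x => g x * f x) ξ) := by
  have hgi := hg.integrable.ofReal (𝕜 := ℂ)
  have hF : ∀ m : ℤ, Integrable (fun x => a m * ((g x : ℂ) * ee ((ξ + m) * x))) := by
    intro m
    refine Integrable.const_mul ?_ _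
    refine hgi.mul_bdd (c := 1) ?_ ?_
    · exact (continuous_ee.comp (by fun_prop)).aestronglyMeasurable
    · exact Eventually.of_forall (fun x => (norm_ee _).le)
  have key := hasSum_integral_of_summable_integral_norm hF (by
    simp_rw [norm_mul, norm_ee, mul_one, integral_const_mul]
    exact h.summ.mul_right _)
  simp_rw [integral_const_mul] at key
  have hE : ft (fun x => g x * f x) ξ = ∫ x, ∑' m : ℤ, a m * ((g x : ℂ) * ee ((ξ + m) * x)) := by
   unfold ft
   congr 1; ext x
   have := ((h.rep x).mul_left ((g x : ℂ) * ee (ξ * x))).tsum_eq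
   push_cast
   rw [mul_right_comm, ← this]
   congr 1; ext m
   rw [add_mul, ee_add]; ring
  rw [hE]
  exact key

lemma step_bound {p : ℝ} (hp : 0 < p) (hp1 : p < 1) {g : ℝ → ℝ} (hg : Adm g) {δ : ℝ} (hδ : 0 < δ) :
    ∃ ε > 0, ∀ (k : ℕ) (f : ℝ → ℝ) (a : ℤ → ℂ) (K : Set ℝ), Blk p ε k f a K →
      Adm (fun x => g x * f x) ∧ ∀ ξ, ‖ft (fun x => g x * f x) ξ - ft g ξ‖ ≤ δ * WW p ξ := by
  obtain ⟨S, hS0, hS⟩ := sum_shift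
  obtain ⟨G, hG0, hG⟩ := hg.decay
  refine ⟨δ / (G * Real.exp 1 * S), by positivity, ?_⟩
  intro k f a K hb
  set ε := δ / (G * Real.exp 1 * S) with hε
  have hε0 : 0 < ε := by positivity
  refine ⟨⟨hg.cont.mul hb.cont, fun x => mul_nonneg (hg.nonneg x) (hb.nonneg x),
    fun x hx => hg.supp x (left_ne_zero_of_mul hx), ?_⟩, ?_⟩
  · obtain ⟨B, hB⟩ := hb.decay
    have hB0 : 0 ≤ B := by
      have := (norm_nonneg _).trans (hB 0)
      simpa using this
    refine ⟨8 * B * G * S + 1, by positivity, fun ξ => ?_⟩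
    have hbd : ∀ m : ℤ, ‖a m * ft g (ξ + m)‖ ≤ 4 * B * G / (1 + |ξ|) ^ 3 *
        (1 / (1 + |ξ + m|) ^ 2 + 1 / (1 + |(0:ℝ) + m|) ^ 2) := by
      intro m
      rw [norm_mul, zero_add]
      set u := 1 + |(m:ℝ)| with hu
      set w := 1 + |ξ + m| with hw
      have hu1 : 1 ≤ u := by linarith [abs_nonneg (m:ℝ)]
      have hw1 : 1 ≤ w := by linarith [abs_nonneg (ξ + m)]
      have hz : 1 + |ξ| ≤ u + w := by
        have := abs_sub (ξ + m) m
        simp only [add_sub_cancel_right] at this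
        linarith
      have hz0 : 0 < 1 + |ξ| := by positivity
      have h1 : (1 + |ξ|) ^ 3 ≤ 4 * (u ^ 3 + w ^ 3) := by
        have : (1 + |ξ|) ^ 3 ≤ (u + w) ^ 3 := by gcongr
        nlinarith [mul_nonneg (by linarith : 0 ≤ u + w) (sq_nonneg (u - w))]
      have h2 : 1 / (u ^ 3 * w ^ 3) ≤ 4 / (1 + |ξ|) ^ 3 * (1 / w ^ 3 + 1 / u ^ 3) := by
        have : 4 / (1 + |ξ|) ^ 3 * (1 / w ^ 3 + 1 / u ^ 3) = (4 * (u ^ 3 + w ^ 3)) / ((1 + |ξ|) ^ 3 * (u ^ 3 * w ^ 3)) := by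
          field_simp
        rw [this, div_le_div_iff₀ (by positivity) (by positivity), one_mul]
        gcongr
      have h3 : 1 / w ^ 3 ≤ 1 / w ^ 2 := by gcongr <;> first | assumption | norm_num
      have h4 : 1 / u ^ 3 ≤ 1 / u ^ 2 := by gcongr <;> first | assumption | norm_num
      calc _ ≤ (B / u ^ 3) * (G / w ^ 3) := by gcongr; exacts [hB m, hG _]
        _ = B * G * (1 / (u ^ 3 * w ^ 3)) := by field_simp
        _ ≤ B * G * (4 / (1 + |ξ|) ^ 3 * (1 / w ^ 2 + 1 / u ^ 2)) := by
          gcongr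
          refine h2.trans ?_
          gcongr ?_ * ?_
          linarith
        _ = _ := by ring
    have hsm := ((hS ξ).1.add (hS 0).1).mul_left (4 * B * G / (1 + |ξ|) ^ 3)
    rw [← (ft_mul hb hg ξ).tsum_eq]
    refine (tsum_of_norm_bounded hsm.hasSum hbd).trans ?_
    rw [tsum_mul_left, (hS ξ).1.tsum_add (hS 0).1]
    have := (hS ξ).2
    have := (hS 0).2
    rw [div_mul_eq_mul_div]
    gcongr
    calc _ ≤ 4 * B * G * (S + S) := by gcongr
      _ ≤ _ := by linarith
  · intro ξ
    have hsub : HasSum (fun m : ℤ => if m = 0 then 0 else a m * ft g (ξ + m))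
        (ft (fun x => g x * f x) ξ - ft g ξ) := by
      have h1 := ft_mul hb hg ξ
      have h2 := h1.sub (hasSum_ite_eq (0:ℤ) (ft g ξ))
      refine h2.congr_fun ?_
      intro m
      split_ifs with hm
      · subst hm; simp [hb.a0]
      · simp
    rw [← hsub.tsum_eq]
    have hbd : ∀ m : ℤ, ‖(if m = 0 then 0 else a m * ft g (ξ + m))‖ ≤
        ε * (Real.exp 1 * WW p ξ) * G * (1 / (1 + |ξ + m|) ^ 2) := by
      intro m
      have := WW_pos p ξ
      split_ifs with hm
      · rw [norm_zero]; positivity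
      · rw [norm_mul]
        calc _ ≤ (ε * (Real.exp 1 * WW p ξ * (1 + |ξ + m|))) * (G / (1 + |ξ + m|) ^ 3) := by
              gcongr
              · exact (hb.small m hm).trans (by gcongr; exact WW_slow hp hp1 ξ m)
              · exact hG _
          _ = _ := by field_simp
    refine (tsum_of_norm_bounded ((hS ξ).1.mul_left _).hasSum hbd).trans ?_
    rw [tsum_mul_left]
    have := WW_pos p ξ
    calc _ ≤ ε * (Real.exp 1 * WW p ξ) * G * S := by gcongr; exact (hS ξ).2
      _ = _ := by rw [hε]; field_simp

section

open scoped FourierTransform SchwartzMap ContDiff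

lemma ft_eq_fourier (g : ℝ → ℝ) (ξ : ℝ) : ft g ξ = 𝓕 (fun x => (g x : ℂ)) ξ := by
  rw [Real.fourier_real_eq_integral_exp_smul]
  unfold ft ee
  congr 1; ext x
  rw [smul_eq_mul, mul_comm]
  congr 4
  ring

/-- The Schwartz function attached to a bump. -/
lemma exists_schwartz {g : ℝ → ℝ} (hc : HasCompactSupport g) (hs : ContDiff ℝ ∞ g) :
    ∃ F : 𝓢(ℝ, ℂ), (⇑F = fun x => (g x : ℂ)) ∧ ∀ ξ, (𝓕 F) ξ = ft g ξ := by
  have hc' : HasCompactSupport (fun x => (g x : ℂ)) := hc.comp_left (g := fun t : ℝ => (t : ℂ)) (by simp)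
  have hs' : ContDiff ℝ ∞ (fun x => (g x : ℂ)) := Complex.ofRealCLM.contDiff.comp hs
  refine ⟨hc'.toSchwartzMap hs', rfl, fun ξ => ?_⟩
  rw [ft_eq_fourier, SchwartzMap.fourier_coe]
  rfl

lemma bump_decay {g : ℝ → ℝ} (hc : HasCompactSupport g) (hs : ContDiff ℝ ∞ g) :
    ∃ G > 0, ∀ ξ, ‖ft g ξ‖ ≤ G / (1 + |ξ|) ^ 3 := by
  obtain ⟨F, -, hF⟩ := exists_schwartz hc hs
  obtain ⟨C₁, hC₁, h₁⟩ := (𝓕 F).decay 3 0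
  obtain ⟨C₂, hC₂, h₂⟩ := (𝓕 F).decay 0 0
  refine ⟨4 * (C₁ + C₂), by positivity, fun ξ => ?_⟩
  have e1 := h₁ ξ
  have e2 := h₂ ξ
  simp only [norm_iteratedFDeriv_zero, hF, Real.norm_eq_abs, pow_zero, one_mul] at e1 e2
  rw [le_div_iff₀ (by positivity)]
  have h0 := abs_nonneg ξ
  have h3 : (1 + |ξ|) ^ 3 ≤ 4 * (1 + |ξ| ^ 3) := by
    nlinarith [mul_nonneg (by linarith : 0 ≤ 1 + |ξ|) (sq_nonneg (1 - |ξ|))]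
  calc _ ≤ ‖ft g ξ‖ * (4 * (1 + |ξ| ^ 3)) := by gcongr
    _ = 4 * (‖ft g ξ‖ + |ξ| ^ 3 * ‖ft g ξ‖) := by ring
    _ ≤ _ := by linarith

lemma exists_base : ∃ v : ℝ → ℝ, Adm v ∧ ContDiff ℝ ∞ v ∧ ∫ x, v x = 1 := by
  let b : ContDiffBump (3/2 : ℝ) := ⟨1/4, 1/2, by norm_num, by norm_num⟩
  have hsm : ContDiff ℝ ∞ (b.normed volume) := b.contDiff_normed
  have hcs : HasCompactSupport (b.normed volume) := b.hasCompactSupport_normed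
  refine ⟨b.normed volume, ⟨hsm.continuous, b.nonneg_normed, ?_, bump_decay hcs hsm⟩, hsm, b.integral_normed⟩
  intro x hx
  have h1 : x ∈ Function.support (b.normed volume) := hx
  rw [b.support_normed_eq, Metric.mem_ball, Real.dist_eq, abs_lt] at h1
  change -(1/2) < _ ∧ _ < (1/2 : ℝ) at h1
  constructor <;> linarith [h1.1, h1.2]

lemma poisson {g : ℝ → ℝ} (hc : HasCompactSupport g) (hs : ContDiff ℝ ∞ g) (y : ℝ) :
    HasSum (fun j : ℤ => ft g (-j) * ee (j * y)) ((∑' n : ℤ, g (y + n) : ℝ) : ℂ) := by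
  obtain ⟨F, hF1, hF⟩ := exists_schwartz hc hs
  obtain ⟨G, hG0, hG⟩ := bump_decay hc hs
  obtain ⟨S, -, hS⟩ := sum_shift
  have hsum : Summable (fun j : ℤ => ft g (-j) * ee (j * y)) := by
    have h0 := (hS 0).1.mul_left G
    refine Summable.of_norm_bounded h0 (fun m => ?_)
    rw [norm_mul, norm_ee, mul_one]
    refine (hG _).trans ?_
    rw [zero_add, mul_one_div, abs_neg]
    gcongr
    · linarith [abs_nonneg (m:ℝ)]
    · norm_num
  have h1 := SchwartzMap.tsum_eq_tsum_fourier F y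
  have h2 : ((∑' n : ℤ, g (y + n) : ℝ) : ℂ) = ∑' n : ℤ, F (y + n) := by
    rw [Complex.ofReal_tsum, hF1]
  rw [h2, h1, ← (Equiv.neg ℤ).tsum_eq]
  convert hsum.hasSum using 2
  ext j
  rw [hF]
  simp only [Equiv.neg_apply]
  rw [fourier_coe_apply]
  unfold ee
  push_cast
  congr 2
  ring

lemma ft_scale (v : ℝ → ℝ) {η : ℝ} (hη : 0 < η) (ξ : ℝ) :
    ft (fun x => η⁻¹ * v (x / η)) ξ = ft v (η * ξ) := by
  unfold ft
  have := Measure.integral_comp_div (fun y => ((η⁻¹ : ℝ) : ℂ) * ((v y : ℂ) * ee (η * ξ * y))) η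
  rw [integral_const_mul (f := fun y => (v y : ℂ) * ee (η * ξ * y)), abs_of_pos hη, Complex.real_smul, ← mul_assoc, ← Complex.ofReal_mul,
    mul_inv_cancel₀ hη.ne', Complex.ofReal_one, one_mul] at this
  rw [← this]
  congr 1; ext x
  have e : η * ξ * (x / η) = ξ * x := by field_simp
  rw [e]
  push_cast
  ring

/-- periodized bump -/
noncomputable def per (v : ℝ → ℝ) (η y : ℝ) : ℝ := ∑' n : ℤ, η⁻¹ * v ((y + n) / η)

lemma per_hasSum {v : ℝ → ℝ} (hc : HasCompactSupport v) (hs : ContDiff ℝ ∞ v) {η : ℝ} (hη : 0 < η) (y : ℝ) :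
    HasSum (fun j : ℤ => ft v (-(η * j)) * ee (j * y)) ((per v η y : ℝ) : ℂ) := by
  have h := poisson (g := fun x => η⁻¹ * v (x / η)) ?_ ?_ y
  · simp_rw [ft_scale v hη] at h
    unfold per
    simpa only [mul_neg] using h
  · apply HasCompactSupport.mul_left
    have := hc.comp_homeomorph (Homeomorph.mulRight₀ η⁻¹ (by positivity))
    simpa [Function.comp_def, div_eq_mul_inv] using this
  · apply ContDiff.mul contDiff_const
    exact hs.comp (contDiff_id.div_const η)

lemma prime_supply : ∀ᶠ P : ℕ in atTop, P ≤ ((Finset.Icc P (P ^ 2)).filter Nat.Prime).card := by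
  have hlim : Tendsto (fun x : ℝ => Real.log x / x) atTop (nhds 0) := Real.isLittleO_log_id_atTop.tendsto_div_nhds_zero
  have hlim2 := hlim.comp (tendsto_natCast_atTop_atTop (R := ℝ))
  have h1 : ∀ᶠ P : ℕ in atTop, Real.log P / P < 1/20 := hlim2.eventually (gt_mem_nhds (by norm_num))
  filter_upwards [h1, eventually_ge_atTop 10] with P hP hP10
  have hP0 : (10 : ℝ) ≤ P := by exact_mod_cast hP10
  rw [div_lt_iff₀ (by linarith)] at hP
  have hlogpos : 0 < Real.log P := Real.log_pos (by linarith)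
  have hpi := Chebyshev.pi_ge (P ^ 2)
  have hcard : Nat.primeCounting (P ^ 2) ≤ P + ((Finset.Icc P (P ^ 2)).filter Nat.Prime).card := by
    rw [Nat.primeCounting, Nat.primeCounting', Nat.count_eq_card_filter_range]
    calc _ ≤ (Finset.range P ∪ ((Finset.Icc P (P ^ 2)).filter Nat.Prime)).card := by
          apply Finset.card_le_card
          intro q
          simp only [Finset.mem_filter, Finset.mem_range, Finset.mem_union, Finset.mem_Icc]
          rintro ⟨h1, h2⟩
          rcases lt_or_ge q P with h | h
          · exact Or.inl h
          · exact Or.inr ⟨⟨h, by omega⟩, h2⟩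
      _ ≤ _ := by
        refine (Finset.card_union_le _ _).trans ?_
        rw [Finset.card_range]
  have hlow : (2 * P : ℝ) ≤ Nat.primeCounting (P ^ 2) := by
    refine le_trans ?_ hpi
    push_cast
    rw [Real.log_pow]
    rw [le_div_iff₀ (by push_cast; positivity)]
    have h2 : Real.log ((P:ℝ) ^ 2 + 1) ≤ 3 * Real.log P := by
      rw [← Real.log_rpow (by linarith)]
      apply Real.log_le_log (by positivity)
      norm_cast
      nlinarith [sq_nonneg (P : ℝ), Nat.pow_le_pow_left hP10 2]
    have h3 := Real.log_two_gt_d9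
    push_cast
    nlinarith
  have : (2 * P : ℝ) ≤ P + ((Finset.Icc P (P ^ 2)).filter Nat.Prime).card := hlow.trans (by exact_mod_cast hcard)
  have : (P : ℝ) ≤ ((Finset.Icc P (P ^ 2)).filter Nat.Prime).card := by linarith
  exact_mod_cast this

lemma asym {p : ℝ} (hp : 0 < p) (hp1 : p < 1) {c ε : ℝ} (hc : 0 < c) (hε : 0 < ε) :
    ∀ᶠ x : ℝ in atTop, 2 * c * x * Real.exp (-x) ≤ ε * Real.exp (-(c * x) ^ p) := by
  have h1 : ∀ᶠ x : ℝ in atTop, c ^ p * x ^ p ≤ x / 2 := by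
    have h := (tendsto_rpow_neg_atTop (y := 1 - p) (by linarith)).const_mul (c ^ p)
    rw [mul_zero] at h
    filter_upwards [h.eventually (gt_mem_nhds (by norm_num : (0:ℝ) < 1/2)), eventually_gt_atTop 0] with x hx hx0
    have e : x ^ p = x ^ (-(1 - p)) * x := by
      rw [← Real.rpow_add_one hx0.ne']; congr 1; ring
    rw [e, ← mul_assoc]
    nlinarith
  have h2 : ∀ᶠ x : ℝ in atTop, 4 * c * (x / 2 * Real.exp (-(x / 2))) < ε := by
    have h := (Real.tendsto_pow_mul_exp_neg_atTop_nhds_zero 1).comp (tendsto_id.atTop_div_const (two_pos (α := ℝ)))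
    have h' := h.const_mul (4 * c)
    rw [mul_zero] at h'
    have := h'.eventually (gt_mem_nhds hε)
    simpa using this
  filter_upwards [h1, h2, eventually_gt_atTop 0] with x e1 e2 e3
  rw [Real.mul_rpow hc.le e3.le]
  have h3 : Real.exp (-x) = Real.exp (-(x/2)) * Real.exp (-(x/2)) := by
    rw [← Real.exp_add]; congr 1; ring
  calc _ = 4 * c * (x / 2 * Real.exp (-(x / 2))) * Real.exp (-(x/2)) := by rw [h3]; ring
    _ ≤ ε * Real.exp (-(x/2)) := by gcongr
    _ ≤ _ := by gcongr


section
open scoped Pointwise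

lemma card_primes_dvd (Q : Finset ℕ) (hQ : ∀ q ∈ Q, q.Prime) (m : ℤ) (hm : m ≠ 0) :
    ((Q.filter (fun q : ℕ => (q : ℤ) ∣ m)).card : ℝ) ≤ 2 * Real.log |(m : ℝ)| := by
  have h1 : (∏ q ∈ Q.filter (fun q : ℕ => (q : ℤ) ∣ m), q) ∣ m.natAbs := by
    apply Finset.prod_primes_dvd
    · intro q hq
      exact (hQ q (Finset.mem_filter.1 hq).1).prime
    · intro q hq
      exact Int.natCast_dvd.1 (Finset.mem_filter.1 hq).2
  have h2 : 2 ^ (Q.filter (fun q : ℕ => (q : ℤ) ∣ m)).card ≤ ∏ q ∈ Q.filter (fun q : ℕ => (q : ℤ) ∣ m), q := by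
    apply Finset.pow_card_le_prod
    intro q hq
    exact (hQ q (Finset.mem_filter.1 hq).1).two_le
  have h3 : 2 ^ (Q.filter (fun q : ℕ => (q : ℤ) ∣ m)).card ≤ m.natAbs :=
    h2.trans (Nat.le_of_dvd (Int.natAbs_pos.2 hm) h1)
  have h4 : (2 : ℝ) ^ (Q.filter (fun q : ℕ => (q : ℤ) ∣ m)).card ≤ |(m : ℝ)| := by
    have : ((2 ^ (Q.filter (fun q : ℕ => (q : ℤ) ∣ m)).card : ℕ) : ℝ) ≤ (m.natAbs : ℝ) := by exact_mod_cast h3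
    rw [Nat.cast_natAbs] at this
    push_cast at this
    exact this
  have h5 := Real.log_le_log (by positivity) h4
  rw [Real.log_pow] at h5
  have := Real.log_two_gt_d9
  have h6 : (0 : ℝ) ≤ (Q.filter (fun q : ℕ => (q : ℤ) ∣ m)).card := by positivity
  nlinarith

lemma norm_ft_le_one {v : ℝ → ℝ} (hv : Adm v) (hv1 : ∫ x, v x = 1) (ξ : ℝ) : ‖ft v ξ‖ ≤ 1 := by
  unfold ft
  refine (norm_integral_le_integral_norm _).trans ?_
  simp_rw [norm_mul, norm_ee, mul_one, Complex.norm_real, Real.norm_eq_abs, abs_of_nonneg (hv.nonneg _)]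
  exact hv1.le

lemma exists_block {p ε : ℝ} (hp : 0 < p) (hp1 : p < 1) (hε : 0 < ε) (k : ℕ) :
    ∃ f a K, Blk p ε k f a K := by
  obtain ⟨v, hv, hvs, hv1⟩ := exists_base
  have hvc : HasCompactSupport v := by
    apply HasCompactSupport.intro (isCompact_Icc (a := (1:ℝ)) (b := 2))
    intro x hx
    by_contra h0
    exact hx (hv.supp x h0)
  obtain ⟨A, hA0, hA⟩ := hv.decay
  -- choice of the scale
  set c : ℝ := 4 * k + 9 with hc
  have hc0 : 0 < c := by positivity
  obtain ⟨x₀, hx₀⟩ := eventually_atTop.1 ((asym hp hp1 hc0 hε).and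
    ((asym hp hp1 one_pos (div_pos hε hA0)).and (eventually_ge_atTop 1)))
  have hlogP : ∀ᶠ P : ℕ in atTop, x₀ ≤ Real.log P :=
    (Real.tendsto_log_atTop.comp tendsto_natCast_atTop_atTop).eventually_ge_atTop x₀
  obtain ⟨P, hcardP, hPx, hP2⟩ := (prime_supply.and (hlogP.and (eventually_ge_atTop 2))).exists
  set Q := (Finset.Icc P (P ^ 2)).filter Nat.Prime with hQ
  have hPR : (2 : ℝ) ≤ P := by exact_mod_cast hP2
  set N : ℝ := (Q.card : ℝ) with hN
  have hNP : (P : ℝ) ≤ N := by rw [hN]; exact_mod_cast hcardP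
  have hN0 : 0 < N := by linarith
  set η : ℝ := 1 / (4 * (P:ℝ) ^ (2 * k)) with hη
  have hη0 : 0 < η := by positivity
  set D : ℝ := 4 * (P:ℝ) ^ (2 * k + 2) with hD
  have hD1 : 1 ≤ D := by
    have : (1:ℝ) ≤ (P:ℝ) ^ (2 * k + 2) := one_le_pow₀ (by linarith)
    linarith
  have hqprime : ∀ q ∈ Q, q.Prime := fun q hq => (Finset.mem_filter.1 hq).2
  have hq2 : ∀ q ∈ Q, (2 : ℝ) ≤ q := fun q hq => by exact_mod_cast (hqprime q hq).two_le
  have hqP : ∀ q ∈ Q, (q : ℝ) ≤ (P:ℝ) ^ 2 := fun q hq => by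
    exact_mod_cast (Finset.mem_Icc.1 (Finset.mem_filter.1 hq).1).2
  set f : ℝ → ℝ := fun x => (1 / N) * ∑ q ∈ Q, per v η (q * x) with hf
  set cf : ℕ → ℤ → ℂ := fun q m => if (q : ℤ) ∣ m then ft v (-(η * (m / q))) else 0 with hcf
  set a : ℤ → ℂ := fun m => (1 / (N : ℂ)) * ∑ q ∈ Q, cf q m with ha
  have hanorm : ∀ m, ‖a m‖ ≤ (1 / N) * ∑ q ∈ Q, ‖cf q m‖ := by
    intro m
    simp only [ha]
    rw [norm_mul, norm_div, norm_one, Complex.norm_real, Real.norm_of_nonneg hN0.le]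
    gcongr
    exact norm_sum_le _ _
  have hadecay : ∀ m : ℤ, ‖a m‖ ≤ A * D ^ 3 / (1 + |(m:ℝ)|) ^ 3 := by
    intro m
    refine (hanorm m).trans ?_
    have : ∀ q ∈ Q, ‖cf q m‖ ≤ A * D ^ 3 / (1 + |(m:ℝ)|) ^ 3 := by
      intro q hq
      simp only [hcf]
      split_ifs with hd
      · refine (hA _).trans ?_
        have hq0 : (0:ℝ) < q := by linarith [hq2 q hq]
        have h1 : (1 + |(m:ℝ)|) / D ≤ 1 + |-(η * ((m:ℝ) / q))| := by
          rw [abs_neg, abs_mul, abs_of_pos hη0, abs_div, abs_of_pos hq0, div_le_iff₀ (by positivity)]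
          have h2 : 1 ≤ η / q * D := by
            have : η / q * D = (P:ℝ) ^ 2 / q := by
              rw [hη, hD, pow_add]; field_simp
            rw [this, one_le_div hq0]
            exact hqP q hq
          have h3 : |(m:ℝ)| ≤ |(m:ℝ)| * (η / q * D) := le_mul_of_one_le_right (abs_nonneg _) h2
          calc 1 + |(m:ℝ)| ≤ D + |(m:ℝ)| * (η / q * D) := by linarith
            _ = _ := by ring
        calc A / (1 + |-(η * ((m:ℝ) / q))|) ^ 3 ≤ A / ((1 + |(m:ℝ)|) / D) ^ 3 := by gcongr
          _ = _ := by field_simp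
      · rw [norm_zero]; positivity
    calc _ ≤ (1 / N) * ∑ q ∈ Q, A * D ^ 3 / (1 + |(m:ℝ)|) ^ 3 := by gcongr with q hq; exact this q hq
      _ = _ := by
        rw [Finset.sum_const, nsmul_eq_mul, ← hN]; field_simp
  have hacount : ∀ m : ℤ, m ≠ 0 → ‖a m‖ ≤ 2 * Real.log |(m:ℝ)| / P := by
    intro m hm
    refine (hanorm m).trans ?_
    have h1 : ∑ q ∈ Q, ‖cf q m‖ ≤ (Q.filter (fun q : ℕ => (q : ℤ) ∣ m)).card := by
      rw [Finset.card_filter]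
      push_cast
      apply Finset.sum_le_sum
      intro q hq
      simp only [hcf]
      split_ifs with hd
      · exact norm_ft_le_one hv hv1 _
      · simp
    have h2 := h1.trans (card_primes_dvd Q hqprime m hm)
    have h3 : 0 ≤ ∑ q ∈ Q, ‖cf q m‖ := Finset.sum_nonneg (fun _ _ => norm_nonneg _)
    calc _ ≤ (1 / (P:ℝ)) * (2 * Real.log |(m:ℝ)|) := by gcongr
      _ = _ := by ring
  have hrep : ∀ x, HasSum (fun m : ℤ => a m * ee (m * x)) (f x : ℂ) := by
    intro x
    have hq : ∀ q ∈ Q, HasSum (fun m : ℤ => cf q m * ee (m * x)) ((per v η (q * x) : ℝ) : ℂ) := by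
      intro q hq
      have hq0 : (q : ℤ) ≠ 0 := by exact_mod_cast (hqprime q hq).ne_zero
      have hq0' : (q : ℝ) ≠ 0 := by exact_mod_cast (hqprime q hq).ne_zero
      have hinj : Function.Injective (fun j : ℤ => (q : ℤ) * j) := mul_right_injective₀ hq0
      rw [← hinj.hasSum_iff]
      · refine (per_hasSum hvc hvs hη0 (q * x)).congr_fun ?_
        intro j
        simp only [hcf, Function.comp_def, dvd_mul_right, if_true]
        congr 2
        · push_cast; congr 2; field_simp
        · push_cast; ring
      · intro m hm
        have : ¬ (q : ℤ) ∣ m := by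
          rintro ⟨j, rfl⟩
          exact hm ⟨j, rfl⟩
        simp [hcf, this]
    have := (hasSum_sum hq).mul_left (1 / (N : ℂ))
    simp only [hf, ha]
    push_cast
    refine this.congr_fun ?_
    intro m
    rw [mul_assoc, Finset.sum_mul]
  refine ⟨f, a, ⋃ q ∈ Q, (fun x : ℝ => (q : ℝ) * x) ⁻¹' (range (fun n : ℤ => (n : ℝ)) + Icc η (2 * η)),
    ?_, hrep, ?_, ⟨_, hadecay⟩, ?_, ?_, ?_, ?_⟩
  · intro x
    refine mul_nonneg (by positivity) (Finset.sum_nonneg (fun q _ => tsum_nonneg (fun n => ?_)))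
    exact mul_nonneg (by positivity) (hv.nonneg _)
  · have hft0 : ft v 0 = 1 := by
      unfold ft
      simp_rw [zero_mul, ee_zero, mul_one]
      rw [integral_complex_ofReal, hv1, Complex.ofReal_one]
    simp only [ha, hcf, dvd_zero, if_true, Int.cast_zero, zero_div, mul_zero, neg_zero, hft0,
      Finset.sum_const, nsmul_eq_mul, mul_one]
    rw [hN]
    have : (Q.card : ℂ) ≠ 0 := by
      have : (Q.card : ℝ) ≠ 0 := hN0.ne'
      exact_mod_cast this
    push_cast
    field_simp
  · intro m hm
    have hm1 : 1 ≤ |(m:ℝ)| := by exact_mod_cast Int.one_le_abs hm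
    have hP0 : (0:ℝ) < P := by linarith
    have hl1 : 1 ≤ Real.log P := (hx₀ _ hPx).2.2
    rcases le_total |(m:ℝ)| (D ^ 2) with hle | hle
    · refine (hacount m hm).trans ?_
      have hDP : 1 + D ^ 2 ≤ (P:ℝ) ^ (4 * k + 9) := by
        have e1 : (P:ℝ) ^ (4 * k + 9) = (P:ℝ) ^ (4 * k + 4) * (P:ℝ) ^ 5 := by rw [← pow_add]
        have e2 : D ^ 2 = 16 * (P:ℝ) ^ (4 * k + 4) := by
          rw [hD, mul_pow, ← pow_mul]; norm_num; congr 1; ring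
        have e3 : (2:ℝ) ^ 5 ≤ (P:ℝ) ^ 5 := by gcongr
        have e4 : (1:ℝ) ≤ (P:ℝ) ^ (4 * k + 4) := one_le_pow₀ (by linarith)
        rw [e1, e2]
        nlinarith
      have hlogc : Real.log ((P:ℝ) ^ (4 * k + 9)) = c * Real.log P := by
        rw [Real.log_pow, hc]; push_cast; ring
      have hL1 : Real.log |(m:ℝ)| ≤ c * Real.log P := by
        rw [← hlogc]; apply Real.log_le_log (by linarith); linarith
      have hL2 : Real.log (1 + |(m:ℝ)|) ≤ c * Real.log P := by
        rw [← hlogc]; apply Real.log_le_log (by linarith); linarith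
      have hL3 : 0 ≤ Real.log (1 + |(m:ℝ)|) := Real.log_nonneg (by linarith)
      have hasy := (hx₀ _ hPx).1
      rw [Real.exp_neg, Real.exp_log hP0] at hasy
      calc 2 * Real.log |(m:ℝ)| / P ≤ 2 * (c * Real.log P) / P := by gcongr
        _ = 2 * c * Real.log P * (P:ℝ)⁻¹ := by ring
        _ ≤ _ := hasy
        _ ≤ _ := by
          unfold WW
          gcongr
    · refine (hadecay m).trans ?_
      set L := Real.log (1 + |(m:ℝ)|) with hL
      have hLx : x₀ ≤ L := by
        refine hPx.trans (Real.log_le_log hP0 ?_)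
        have e1 : (P:ℝ) ≤ (P:ℝ) ^ (2 * k + 2) := le_self_pow₀ (by linarith) (by omega)
        have e2 : D ≤ D ^ 2 := le_self_pow₀ hD1 (by norm_num)
        linarith
      obtain ⟨-, hasy, hL1⟩ := hx₀ L hLx
      have hexp : Real.exp (-L) = 1 / (1 + |(m:ℝ)|) := by
        rw [Real.exp_neg, hL, Real.exp_log (by linarith), one_div]
      have h3 : D ^ 3 / (1 + |(m:ℝ)|) ^ 3 ≤ 1 / (1 + |(m:ℝ)|) := by
        rw [div_le_div_iff₀ (by positivity) (by positivity), one_mul]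
        have e3 : D ^ 3 ≤ (1 + |(m:ℝ)|) ^ 2 := by
          calc D ^ 3 ≤ D ^ 4 := pow_le_pow_right₀ hD1 (by norm_num)
            _ = (D ^ 2) ^ 2 := by ring
            _ ≤ _ := by gcongr; linarith
        calc D ^ 3 * (1 + |(m:ℝ)|) ≤ (1 + |(m:ℝ)|) ^ 2 * (1 + |(m:ℝ)|) := by gcongr
          _ = _ := by ring
      unfold WW
      rw [← hL]
      rw [one_mul, mul_one] at hasy
      calc A * D ^ 3 / (1 + |(m:ℝ)|) ^ 3 = A * (D ^ 3 / (1 + |(m:ℝ)|) ^ 3) := by ring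
        _ ≤ A * (1 / (1 + |(m:ℝ)|)) := by gcongr
        _ = A * (1 * Real.exp (-L)) := by rw [hexp, one_mul]
        _ ≤ A * (2 * L * Real.exp (-L)) := by gcongr; linarith
        _ ≤ A * (ε / A * Real.exp (-L ^ p)) := by gcongr
        _ = _ := by field_simp
  · refine Q.finite_toSet.isClosed_biUnion (fun q _ => IsClosed.preimage (by fun_prop) ?_)
    exact IsClosed.add_right_of_isCompact Int.isClosedEmbedding_coe_real.isClosed_range isCompact_Icc
  · intro x hx
    have h1 := right_ne_zero_of_mul hx
    obtain ⟨q, hq, hq1⟩ := Finset.exists_ne_zero_of_sum_ne_zero h1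
    have h2 : ∃ n : ℤ, v ((q * x + n) / η) ≠ 0 := by
      by_contra hcon
      push Not at hcon
      apply hq1
      unfold per
      simp [hcon]
    obtain ⟨n, hn⟩ := h2
    have h3 := hv.supp _ hn
    rw [mem_Icc, le_div_iff₀ hη0, div_le_iff₀ hη0] at h3
    refine mem_iUnion₂.2 ⟨q, hq, ?_⟩
    refine Set.mem_add.2 ⟨((-n : ℤ) : ℝ), ⟨-n, rfl⟩, q * x + n, ⟨by linarith [h3.1], h3.2⟩, ?_⟩
    push_cast; ring
  · intro x hx
    obtain ⟨q, hq, hx⟩ := mem_iUnion₂.1 hx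
    obtain ⟨_, ⟨n, rfl⟩, t, ht, hxt⟩ := Set.mem_add.1 hx
    have hq0 := hq2 q hq
    have hq0' : (0:ℝ) < q := by linarith
    refine ⟨n, q, by exact_mod_cast (hqprime q hq).one_lt, ?_, ?_⟩
    · intro hcon
      rw [Int.cast_natCast, eq_div_iff hq0'.ne'] at hcon
      have := ht.1
      simp only at hxt
      linarith
    · have e : x - (n:ℝ) / ((q : ℤ) : ℝ) = t / q := by
        rw [Int.cast_natCast]
        simp only at hxt
        field_simp
        linarith
      rw [e, Int.cast_natCast, abs_of_pos (div_pos (by linarith [ht.1]) hq0')]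
      rw [div_lt_div_iff₀ hq0' (by positivity), one_mul]
      have h1 : (q:ℝ) ^ k ≤ (P:ℝ) ^ (2 * k) := by
        rw [pow_mul]; gcongr; exact hqP q hq
      calc t * (q:ℝ) ^ k ≤ (2 * η) * (P:ℝ) ^ (2 * k) := by
            gcongr
            exact ht.2
        _ = 1 / 2 := by rw [hη]; field_simp; norm_num
        _ < q := by linarith

end

end


lemma ft_zero (g : ℝ → ℝ) : ft g 0 = ((∫ x, g x : ℝ) : ℂ) := by
  unfold ft
  rw [← integral_complex_ofReal]
  congr 1; ext x; rw [zero_mul, ee_zero, mul_one]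

lemma WW_zero {p : ℝ} (hp : 0 < p) : WW p 0 = 1 := by
  unfold WW; simp [Real.zero_rpow hp.ne']

lemma fourierT_eq (μ : Measure ℝ) (ξ : ℝ) : fourierT μ ξ = ∫ x, ee (ξ * x) ∂μ := by
  unfold fourierT ee
  congr 1; ext x; congr 3; ring

lemma part_one (p : ℝ) (hp : 0 < p) (hp1 : p < 1) : ∃ μ : Measure ℝ, IsProbabilityMeasure μ ∧ μ {x : ℝ | Liouville x}ᶜ = 0 ∧
        ∃ C > (0 : ℝ), ∃ M > (1 : ℝ),
          ∀ ξ : ℝ, M ≤ |ξ| →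
            ‖fourierT μ ξ‖ ≤ C * Real.exp (-(Real.log |ξ|) ^ p) := by
  obtain ⟨v, hv, -, hv1⟩ := exists_base
  have step : ∀ (g : {g : ℝ → ℝ // Adm g}) (k : ℕ), ∃ (g' : {g : ℝ → ℝ // Adm g}) (K : Set ℝ),
      IsClosed K ∧ (∀ x ∈ K, ∃ c b : ℤ, 1 < b ∧ x ≠ c / b ∧ |x - c / b| < 1 / (b : ℝ) ^ k) ∧
      (∀ x, g'.1 x ≠ 0 → g.1 x ≠ 0 ∧ x ∈ K) ∧
      ∀ ξ, ‖ft g'.1 ξ - ft g.1 ξ‖ ≤ 1/4 * (1/2) ^ k * WW p ξ := by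
    intro g k
    obtain ⟨ε, hε, hst⟩ := step_bound hp hp1 g.2 (δ := 1/4 * (1/2) ^ k) (by positivity)
    obtain ⟨f, a, K, hb⟩ := exists_block hp hp1 hε k
    obtain ⟨h1, h2⟩ := hst k f a K hb
    exact ⟨⟨_, h1⟩, K, hb.closed, hb.approx,
      fun x hx => ⟨left_ne_zero_of_mul hx, hb.supp x (right_ne_zero_of_mul hx)⟩, h2⟩
  choose nxt KK hclosed happ hsup hft using step
  let s : ℕ → {g : ℝ → ℝ // Adm g} := fun n => Nat.rec ⟨v, hv⟩ (fun k g => nxt g k) n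
  have hs0 : s 0 = ⟨v, hv⟩ := rfl
  have hss : ∀ n, s (n + 1) = nxt (s n) n := fun n => rfl
  have hclose : ∀ n ξ, ‖ft (s n).1 ξ - ft v ξ‖ ≤ 1/2 * (1 - (1/2) ^ n) * WW p ξ := by
    intro n ξ
    induction n with
    | zero => simp [hs0]
    | succ n ih =>
      have h1 := hft (s n) n ξ
      rw [← hss] at h1
      have := norm_sub_le_norm_sub_add_norm_sub (ft (s (n+1)).1 ξ) (ft (s n).1 ξ) (ft v ξ)
      rw [pow_succ]
      linarith
  have hclose' : ∀ n ξ, ‖ft (s n).1 ξ - ft v ξ‖ ≤ 1/2 * WW p ξ := by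
    intro n ξ
    refine (hclose n ξ).trans ?_
    have := WW_pos p ξ
    have : (0:ℝ) < (1/2) ^ n := by positivity
    gcongr
    linarith
  have hsupp : ∀ n k, k < n → ∀ x, (s n).1 x ≠ 0 → x ∈ KK (s k) k := by
    intro n
    induction n with
    | zero => intro k hk; omega
    | succ n ih =>
      intro k hk x hx
      have h1 := hsup (s n) n x hx
      rcases Nat.lt_succ_iff_lt_or_eq.1 hk with h | h
      · exact ih k h x h1.1
      · subst h; exact h1.2
  have hm : ∀ n, (1/2 : ℝ) ≤ ∫ x, (s n).1 x := by
    intro n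
    have := hclose' n 0
    rw [ft_zero, ft_zero, hv1, WW_zero hp, ← Complex.ofReal_sub, Complex.norm_real, Real.norm_eq_abs] at this
    have := (abs_le.1 this).1
    linarith
  have hmpos : ∀ n, (0 : ℝ) < ∫ x, (s n).1 x := fun n => by linarith [hm n]
  let ν : ℕ → Measure ℝ := fun n => volume.withDensity
    (fun x => ENNReal.ofReal ((s n).1 x / ∫ x, (s n).1 x))
  have hnn : ∀ n x, 0 ≤ (s n).1 x / ∫ x, (s n).1 x := fun n x => div_nonneg ((s n).2.nonneg x) (hmpos n).le
  have hprob : ∀ n, IsProbabilityMeasure (ν n) := by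
    intro n
    constructor
    simp only [ν]
    rw [withDensity_apply _ MeasurableSet.univ, Measure.restrict_univ,
      ← ofReal_integral_eq_lintegral_ofReal ((s n).2.integrable.div_const _) (Eventually.of_forall (hnn n)),
      integral_div, div_self (hmpos n).ne', ENNReal.ofReal_one]
  have hnull : ∀ n (K : Set ℝ), IsClosed K → (∀ x, (s n).1 x ≠ 0 → x ∈ K) → ν n Kᶜ = 0 := by
    intro n K hK hx
    simp only [ν]
    rw [withDensity_apply _ hK.measurableSet.compl]
    rw [setLIntegral_congr_fun (g := fun _ => 0) hK.measurableSet.compl]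
    · simp
    · intro x hxK
      have : (s n).1 x = 0 := by
        by_contra h0; exact hxK (hx x h0)
      simp [this]
  have hfT : ∀ n ξ, ∫ x, ee (ξ * x) ∂(ν n) = ft (s n).1 ξ / ((∫ x, (s n).1 x : ℝ) : ℂ) := by
    intro n ξ
    simp only [ν]
    rw [integral_withDensity_eq_integral_toReal_smul]
    · unfold ft
      rw [← integral_div]
      congr 1; ext x
      rw [ENNReal.toReal_ofReal (hnn n x), Complex.real_smul]
      push_cast; ring
    · have := (s n).2.cont
      fun_prop
    · exact Eventually.of_forall (fun x => ENNReal.ofReal_lt_top)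
  obtain ⟨G, hG0, hG⟩ := hv.decay
  have hbound : ∀ n ξ, ‖∫ x, ee (ξ * x) ∂(ν n)‖ ≤ (2 * (G * Real.exp 1) + 1) * WW p ξ := by
    intro n ξ
    rw [hfT, norm_div, Complex.norm_real, Real.norm_of_nonneg (hmpos n).le, div_le_iff₀ (hmpos n)]
    have hW := WW_pos p ξ
    have h1 : ‖ft v ξ‖ ≤ G * Real.exp 1 * WW p ξ := by
      refine (hG ξ).trans ?_
      rw [div_le_iff₀ (by positivity)]
      have h2 := WW_slow hp hp1 ξ 0
      rw [WW_zero hp, add_zero] at h2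
      have h3 : (1 + |ξ|) ≤ (1 + |ξ|) ^ 3 := le_self_pow₀ (by linarith [abs_nonneg ξ]) (by norm_num)
      calc G = G * 1 := by ring
        _ ≤ G * (Real.exp 1 * WW p ξ * (1 + |ξ|)) := by gcongr
        _ ≤ G * (Real.exp 1 * WW p ξ * (1 + |ξ|) ^ 3) := by gcongr
        _ = _ := by ring
    have h2 : ‖ft (s n).1 ξ‖ ≤ G * Real.exp 1 * WW p ξ + 1/2 * WW p ξ := by
      have := norm_le_norm_add_norm_sub' (ft (s n).1 ξ) (ft v ξ)
      linarith [hclose' n ξ]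
    have h3 : (2 * (G * Real.exp 1) + 1) * WW p ξ * (1/2) ≤ (2 * (G * Real.exp 1) + 1) * WW p ξ * ∫ x, (s n).1 x := by
      gcongr; exact hm n
    linarith
  let P : ℕ → ProbabilityMeasure ℝ := fun n => ⟨ν n, hprob n⟩
  have hcomp : IsCompact (closure (range P)) := by
    apply isCompact_closure_of_isTightMeasureSet
    rw [isTightMeasureSet_iff_exists_isCompact_measure_compl_le]
    intro ε hε
    refine ⟨Icc 1 2, isCompact_Icc, ?_⟩
    rintro _ ⟨_, ⟨n, rfl⟩, rfl⟩
    change ν n _ ≤ ε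
    rw [hnull n _ isClosed_Icc ((s n).2.supp)]
    exact zero_le
  obtain ⟨μ, -, hμ⟩ := hcomp.exists_mapClusterPt (u := P) (f := atTop)
    (tendsto_principal.2 (Eventually.of_forall (fun n => subset_closure (mem_range_self n))))
  obtain ⟨U, hU, hlim⟩ := mapClusterPt_iff_ultrafilter.1 hμ
  refine ⟨μ, inferInstance, ?_, 2 * (G * Real.exp 1) + 1, by positivity, 2, by norm_num, ?_⟩
  · have hKnull : ∀ k, (μ : Measure ℝ) (KK (s k) k)ᶜ = 0 := by
      intro k
      have h1 := ProbabilityMeasure.le_liminf_measure_open_of_tendsto hlim (hclosed (s k) k).isOpen_compl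
      have h2 : ∀ᶠ n in (U : Filter ℕ), ((P n : Measure ℝ) (KK (s k) k)ᶜ) = 0 := by
        apply hU
        filter_upwards [eventually_gt_atTop k] with n hn
        exact hnull n _ (hclosed _ _) (hsupp n k hn)
      rw [liminf_congr h2, liminf_const] at h1
      exact le_antisymm h1 zero_le
    refine measure_mono_null ?_ (measure_iUnion_null hKnull)
    intro x hx
    by_contra hcon
    apply hx
    intro k
    apply happ (s k) k
    by_contra h0
    exact hcon (mem_iUnion.2 ⟨k, h0⟩)
  · intro ξ hξ
    have h1 : ‖fourierT μ ξ‖ ≤ (2 * (G * Real.exp 1) + 1) * WW p ξ := by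
      rw [fourierT_eq]
      rw [ProbabilityMeasure.tendsto_iff_forall_integral_rclike_tendsto ℂ] at hlim
      have hc : Continuous (fun x => ee (ξ * x)) := continuous_ee.comp (by fun_prop)
      have h2 := hlim (BoundedContinuousFunction.ofNormedAddCommGroup (fun x => ee (ξ * x)) hc 1
        (fun x => (norm_ee _).le))
      exact le_of_tendsto h2.norm (Eventually.of_forall (fun n => hbound n ξ))
    refine h1.trans ?_
    unfold WW
    gcongr
    · exact Real.log_nonneg (by linarith)
    · linarith

theorem stmt18 (p : ℝ) (hp : 0 < p) :
    (p < 1 →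
      ∃ μ : Measure ℝ, IsProbabilityMeasure μ ∧ μ {x : ℝ | Liouville x}ᶜ = 0 ∧
        ∃ C > (0 : ℝ), ∃ M > (1 : ℝ),
          ∀ ξ : ℝ, M ≤ |ξ| →
            ‖fourierT μ ξ‖ ≤ C * Real.exp (-(Real.log |ξ|) ^ p)) ∧
    (1 ≤ p →
      ¬ ∃ μ : Measure ℝ, IsProbabilityMeasure μ ∧ μ {x : ℝ | Liouville x}ᶜ = 0 ∧
        ∃ C > (0 : ℝ), ∃ M > (1 : ℝ),
          ∀ ξ : ℝ, M ≤ |ξ| →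
            ‖fourierT μ ξ‖ ≤ C * Real.exp (-(Real.log |ξ|) ^ p)) := by
  exact ⟨fun h => part_one p hp h, fun h => part_two p h⟩
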